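/- arXiv:1008.3229 — 4 statements merged into one kernel-verified Lean document; each statement's English description precedes it below -/
import Mathlib

section
/- Under conditions (C1)–(C2) with γ > 0, for every x > 0, the quantity [ (U(tx) − U(t))/(t·U'(t)) − (x^γ − 1)/γ ] / A(t) converges, as t → ∞, to K_{γ,ρ}(x) = ∫₁^x u^{γ−1}(∫₁^u s^{ρ−1} ds) du. -/
open Filter Real

noncomputable section

/-- `K_{γ,ρ}(x) = ∫₁^x u^{γ−1} (∫₁^u s^{ρ−1} ds) du`. -/
def Kfun (γ ρ x : ℝ) : ℝ :=
  ∫ u in (1:ℝ)..x, u ^ (γ - 1) * ∫ s in (1:ℝ)..u, s ^ (ρ - 1)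

open Set MeasureTheory Topology in
theorem hasDerivAt_prim (g : ℝ → ℝ) (hg : ContinuousOn g (Ioi 0)) (x : ℝ) (hx : 0 < x) :
    HasDerivAt (fun x => ∫ u in (1:ℝ)..x, g u) (g x) x := by
  apply intervalIntegral.integral_hasDerivAt_right
  · apply ContinuousOn.intervalIntegrable
    apply hg.mono
    intro y hy
    rcases le_total 1 x with h | h
    · rw [uIcc_of_le h] at hy
      exact lt_of_lt_of_le one_pos hy.1
    · rw [uIcc_of_ge h] at hy
      exact lt_of_lt_of_le hx hy.1
  · exact hg.stronglyMeasurableAtFilter isOpen_Ioi x hx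
  · exact hg.continuousAt (Ioi_mem_nhds hx)

open Set MeasureTheory Topology in
theorem uct_integral (f : ℝ → ℝ) (hf : Measurable f) (ρ : ℝ)
    (h : ∀ u, Tendsto (fun t => f (t + u) - f t) atTop (𝓝 (ρ * u))) (a b : ℝ) :
    Tendsto (fun t => ∫ u in a..b, min 1 |f (t + u) - f t - ρ * u|) atTop (𝓝 0) := by
  have := intervalIntegral.tendsto_integral_filter_of_dominated_convergence
    (F := fun t u => min 1 |f (t + u) - f t - ρ * u|) (f := fun _ => (0:ℝ)) (l := atTop)
    (μ := volume) (a := a) (b := b) (fun _ => (1:ℝ)) ?_ ?_ ?_ ?_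
  · simpa using this
  · refine Eventually.of_forall fun t => Measurable.aestronglyMeasurable ?_
    fun_prop
  · refine Eventually.of_forall fun t => Eventually.of_forall fun u _ => ?_
    rw [Real.norm_of_nonneg (le_min zero_le_one (abs_nonneg _))]
    exact min_le_left _ _
  · exact intervalIntegrable_const
  · refine Eventually.of_forall fun u _ => ?_
    have h1 := ((h u).sub_const (ρ * u)).abs
    have h2 := (tendsto_const_nhds (x := (1:ℝ))).min h1
    simpa using h2

open Set MeasureTheory Topology in
theorem uct (f : ℝ → ℝ) (hf : Measurable f) (ρ : ℝ)
    (h : ∀ u, Tendsto (fun t => f (t + u) - f t) atTop (𝓝 (ρ * u))) (L : ℝ)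
    (ε : ℝ) (hε : 0 < ε) :
    ∀ᶠ t in atTop, ∀ u ∈ Icc (-L) L, |f (t + u) - f t - ρ * u| < ε := by
  set d : ℝ → ℝ → ℝ := fun t u => min 1 |f (t + u) - f t - ρ * u| with hd
  have hd0 : ∀ t u, 0 ≤ d t u := fun t u => le_min zero_le_one (abs_nonneg _)
  have hint : ∀ t a b, IntervalIntegrable (d t) volume a b := by
    intro t a b
    refine (intervalIntegrable_const (c := (1:ℝ))).mono_fun ?_ ?_
    · refine Measurable.aestronglyMeasurable ?_
      simp only [hd]
      fun_prop
    · refine Eventually.of_forall fun u => ?_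
      show ‖d t u‖ ≤ ‖(1:ℝ)‖
      rw [Real.norm_of_nonneg (hd0 t u), norm_one]
      exact min_le_left _ _
  have hε' : 0 < min ε 1 / 2 := by positivity
  have hG := (uct_integral f hf ρ h (-L) (L+1)).eventually (gt_mem_nhds hε')
  have hH := (uct_integral f hf ρ h 0 1).eventually (gt_mem_nhds hε')
  obtain ⟨T, hT⟩ := eventually_atTop.1 hH
  filter_upwards [hG, eventually_ge_atTop (T + L)] with t hGt ht u hu
  have hHt := hT (t + u) (by linarith [hu.1])
  set D := |f (t + u) - f t - ρ * u| with hD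
  have key : min 1 D ≤ ∫ v in (0:ℝ)..1, (d t (u + v) + d (t + u) v) := by
    have : min 1 D = ∫ v in (0:ℝ)..1, min 1 D := by simp
    rw [this]
    apply intervalIntegral.integral_mono_on zero_le_one intervalIntegrable_const
    · have := (hint t (u+0) (u+1)).comp_add_left u
      simp only [add_sub_cancel_left] at this
      exact this.add (hint _ _ _)
    · intro v _
      have e : D ≤ |f (t + (u + v)) - f t - ρ * (u + v)| + |f (t + u + v) - f (t + u) - ρ * v| := by
        rw [hD, ← add_assoc t u v]
        have := abs_sub (f (t + u + v) - f t - ρ * (u + v)) (f (t + u + v) - f (t + u) - ρ * v)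
        refine le_trans (le_of_eq ?_) this
        congr 1; ring
      simp only [hd]
      have p1 := abs_nonneg (f (t + (u + v)) - f t - ρ * (u + v))
      have p2 := abs_nonneg (f (t + u + v) - f (t + u) - ρ * v)
      rcases min_cases 1 (|f (t + (u + v)) - f t - ρ * (u + v)|) with h1 | h1 <;>
      rcases min_cases 1 (|f (t + u + v) - f (t + u) - ρ * v|) with h2 | h2 <;>
      rcases min_cases 1 D with h3 | h3 <;> linarith
  have i1 : IntervalIntegrable (fun v => d t (u + v)) volume 0 1 := by
    have := (hint t (u+0) (u+1)).comp_add_left u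
    simpa only [add_sub_cancel_left] using this
  rw [intervalIntegral.integral_add i1 (hint _ _ _),
    intervalIntegral.integral_comp_add_left (fun v => d t v) u] at key
  have mono : ∫ v in (u+0)..(u+1), d t v ≤ ∫ v in (-L)..(L+1), d t v := by
    apply intervalIntegral.integral_mono_interval (by linarith [hu.1]) (by linarith)
      (by linarith [hu.2]) (Eventually.of_forall fun v => hd0 t v) (hint _ _ _)
  have : min 1 D < min ε 1 := by linarith
  rcases min_cases 1 D with h3 | h3
  · linarith [min_le_right ε 1]
  · linarith [min_le_left ε 1]

open Set in
theorem mv_bound (g g' : ℝ → ℝ) (a b ε : ℝ) (h1 : (1:ℝ) ∈ Icc a b) (hε : 0 ≤ ε)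
    (hg : ∀ s ∈ Icc a b, HasDerivAt g (g' s) s) (hb : ∀ s ∈ Icc a b, |g' s| ≤ ε) (h0 : g 1 = 0) :
    ∀ s ∈ Icc a b, |g s| ≤ ε * (b - a) := by
  intro s hs
  have := (convex_Icc a b).norm_image_sub_le_of_norm_hasDerivWithin_le
    (fun x hx => (hg x hx).hasDerivWithinAt) hb h1 hs
  rw [h0, sub_zero, Real.norm_eq_abs, Real.norm_eq_abs] at this
  refine this.trans (mul_le_mul_of_nonneg_left ?_ hε)
  rw [abs_le]
  constructor <;> linarith [hs.1, hs.2, h1.1, h1.2]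

open Set Topology in
theorem ratio_unif (A B : ℝ → ℝ) (hB : Measurable B) (ρ : ℝ) (hρ : ρ ≤ 0)
    (T : ℝ) (hT : 1 ≤ T) (hAB : ∀ t ≥ T, A t = B t)
    (hs : (∀ t ≥ T, 0 < A t) ∨ (∀ t ≥ T, A t < 0))
    (hRV : ∀ x > 0, Tendsto (fun t => |A (t * x)| / |A t|) atTop (𝓝 (x ^ ρ)))
    (a b : ℝ) (ha : 0 < a) (ε : ℝ) (hε : 0 < ε) :
    ∀ᶠ t in atTop, ∀ s ∈ Icc a b, |A (t * s) / A t - s ^ ρ| ≤ ε := by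
  have hne : ∀ t ≥ T, A t ≠ 0 := by
    intro t ht
    rcases hs with h | h
    · exact (h t ht).ne'
    · exact (h t ht).ne
  have hpos : ∀ t ≥ T, ∀ r ≥ T, 0 < A r / A t := by
    intro t ht r hr
    rcases hs with h | h
    · exact div_pos (h r hr) (h t ht)
    · exact div_pos_of_neg_of_neg (h r hr) (h t ht)
  set f : ℝ → ℝ := fun u => Real.log (B (Real.exp u)) with hf
  have hfm : Measurable f := by
    simp only [hf]; fun_prop
  have hlim : ∀ u, Tendsto (fun t => f (t + u) - f t) atTop (𝓝 (ρ * u)) := by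
    intro u
    have h1 := ((hRV (exp u) (exp_pos u)).comp tendsto_exp_atTop).log
      (Real.rpow_pos_of_pos (exp_pos u) ρ).ne'
    rw [Real.log_rpow (exp_pos u), Real.log_exp] at h1
    refine h1.congr' ?_
    have e1 := tendsto_exp_atTop.eventually (eventually_ge_atTop T)
    have e2 := (tendsto_exp_atTop.comp (tendsto_atTop_add_const_right atTop u tendsto_id)).eventually
      (eventually_ge_atTop T)
    filter_upwards [e1, e2] with t ht1 ht2
    simp only [Function.comp, id] at ht2
    simp only [Function.comp, hf]
    rw [← hAB _ ht1, ← hAB _ ht2, ← Real.exp_add, Real.log_div, Real.log_abs, Real.log_abs]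
    · exact abs_ne_zero.2 (hne _ ht2)
    · exact abs_ne_zero.2 (hne _ ht1)
  set C := a ^ ρ with hC
  have hCpos : 0 < C := Real.rpow_pos_of_pos ha ρ
  have hδ : 0 < min 1 (ε / (2 * C)) := by positivity
  set L := max |Real.log a| |Real.log b|
  have hu := uct f hfm ρ hlim L _ hδ
  filter_upwards [tendsto_log_atTop.eventually hu, eventually_ge_atTop T,
    (tendsto_id.atTop_mul_const ha).eventually (eventually_ge_atTop T)] with t h1 h2 h3 s hs'
  have hspos : 0 < s := ha.trans_le hs'.1
  have htpos : 0 < t := by linarith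
  have h3' : T ≤ t * s := by
    simp only [id] at h3
    exact h3.trans (mul_le_mul_of_nonneg_left hs'.1 htpos.le)
  have h4 := h1 (Real.log s) ⟨by
      have := Real.log_le_log ha hs'.1
      have h5 : |Real.log a| ≤ L := le_max_left _ _
      linarith [neg_abs_le (Real.log a)], by
      have := Real.log_le_log hspos hs'.2
      have h5 : |Real.log b| ≤ L := le_max_right _ _
      linarith [le_abs_self (Real.log b)]⟩
  rw [← Real.log_mul htpos.ne' hspos.ne'] at h4
  simp only [hf] at h4
  rw [Real.exp_log htpos, Real.exp_log (mul_pos htpos hspos), ← hAB _ h2, ← hAB _ h3',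
    ← Real.log_div (hne _ h3') (hne _ h2)] at h4
  set D := Real.log (A (t * s) / A t) - ρ * Real.log s with hD
  have e : A (t * s) / A t = s ^ ρ * Real.exp D := by
    rw [hD, Real.exp_sub, Real.exp_log (hpos _ h2 _ h3'), Real.rpow_def_of_pos hspos,
      mul_comm (Real.log s)]
    field_simp
  have hsC : s ^ ρ ≤ C := Real.rpow_le_rpow_of_nonpos ha hs'.1 hρ
  have hs0 : 0 < s ^ ρ := Real.rpow_pos_of_pos hspos ρ
  have h6 := Real.abs_exp_sub_one_le (x := D) (h4.le.trans (min_le_left _ _))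
  have h7 : |D| ≤ ε / (2 * C) := h4.le.trans (min_le_right _ _)
  have : A (t * s) / A t - s ^ ρ = s ^ ρ * (Real.exp D - 1) := by rw [e]; ring
  rw [this, abs_mul, abs_of_pos hs0]
  calc s ^ ρ * |Real.exp D - 1| ≤ C * (2 * (ε / (2 * C))) := by
        apply mul_le_mul hsC (by linarith) (abs_nonneg _) hCpos.le
    _ = ε := by field_simp

/-- Second-order regular variation of `U`: under (C1)–(C2),
`((U(tx) − U(t))/(t U'(t)) − (x^γ − 1)/γ) / A(t) → K_{γ,ρ}(x)` as `t → ∞`, for `x > 0`. -/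
theorem second_order_condition_U
    (F Ufun U' U'' : ℝ → ℝ) (γ : ℝ) (hγ : 0 < γ)
    (hUinv : ∀ t > 1, 1 - F (Ufun t) = 1 / t)
    (hU' : ∀ t > 1, HasDerivAt Ufun (U' t) t)
    (hU'' : ∀ t > 1, HasDerivAt U' (U'' t) t)
    (Afun : ℝ → ℝ) (hAdef : ∀ t, Afun t = t * U'' t / U' t + 1 - γ)
    (hC1 : Tendsto Afun atTop (nhds 0))
    (hSign : ∃ T : ℝ, (∀ t ≥ T, 0 < Afun t) ∨ (∀ t ≥ T, Afun t < 0))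
    (ρ : ℝ) (hρ : ρ ≤ 0)
    (hRV : ∀ x > 0, Tendsto (fun t => |Afun (t * x)| / |Afun t|) atTop (nhds (x ^ ρ))) :
    ∀ x > (0:ℝ),
      Tendsto (fun t => ((Ufun (t * x) - Ufun t) / (t * U' t) - (x ^ γ - 1) / γ) / Afun t)
        atTop (nhds (Kfun γ ρ x)) := by
  intro x hx
  obtain ⟨T0, hT0⟩ := hSign
  -- eventually the derivative does not vanish
  have hUne : ∀ᶠ t in atTop, U' t ≠ 0 := by
    by_cases h1 : γ = 1
    · filter_upwards [eventually_ge_atTop T0] with t ht h0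
      have := hAdef t
      rw [h0, h1] at this
      simp at this
      rcases hT0 with h | h
      · linarith [h t ht]
      · linarith [h t ht]
    · have hne : (0:ℝ) ≠ 1 - γ := fun h => h1 (by linarith)
      filter_upwards [hC1.eventually_ne hne] with t ht h0
      apply ht
      rw [hAdef t, h0]; simp
  obtain ⟨T1, hT1⟩ := eventually_atTop.1 hUne
  set T := max (max T0 T1) 2 with hTdef
  have hTT0 : T0 ≤ T := (le_max_left _ _).trans (le_max_left _ _)
  have hTT1 : T1 ≤ T := (le_max_right _ _).trans (le_max_left _ _)
  have hT2 : 2 ≤ T := le_max_right _ _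
  have hU0 : ∀ t ≥ T, U' t ≠ 0 := fun t ht => hT1 t (hTT1.trans ht)
  have hs : (∀ t ≥ T, 0 < Afun t) ∨ (∀ t ≥ T, Afun t < 0) := by
    rcases hT0 with h | h
    · exact Or.inl fun t ht => h t (hTT0.trans ht)
    · exact Or.inr fun t ht => h t (hTT0.trans ht)
  have hA0 : ∀ t ≥ T, Afun t ≠ 0 := by
    intro t ht
    rcases hs with h | h
    · exact (h t ht).ne'
    · exact (h t ht).ne
  -- U' has constant sign
  have hUcont : ContinuousOn U' (Set.Ioi 1) := fun t ht =>
    (hU'' t ht).continuousAt.continuousWithinAt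
  have hUpos : ∀ t ≥ T, ∀ r ≥ T, 0 < U' r / U' t := by
    intro t ht r hr
    have hc : ContinuousOn (fun r => U' r / U' t) (Set.uIcc t r) := by
      apply ContinuousOn.div_const
      apply hUcont.mono
      intro y hy
      have : T ≤ y := (le_inf ht hr).trans hy.1
      exact lt_of_lt_of_le (by linarith) this
    by_contra hneg
    rw [not_lt] at hneg
    have hiv := intermediate_value_uIcc hc
    have h0 : (0:ℝ) ∈ Set.uIcc (U' t / U' t) (U' r / U' t) := by
      rw [div_self (hU0 t ht), Set.uIcc_of_ge (by linarith)]
      exact ⟨hneg, zero_le_one⟩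
    obtain ⟨y, hy, hy0⟩ := hiv h0
    have : T ≤ y := (le_inf ht hr).trans hy.1
    exact div_ne_zero (hU0 y this) (hU0 t ht) hy0
  -- measurable version
  set B : ℝ → ℝ := fun t => t * deriv U' t / (Set.Ioi (1:ℝ)).piecewise U' (fun _ => 0) t + 1 - γ
    with hB
  have hBm : Measurable B := by
    have m1 : Measurable ((Set.Ioi (1:ℝ)).piecewise U' (fun _ => (0:ℝ))) :=
      hUcont.measurable_piecewise continuousOn_const measurableSet_Ioi
    have m2 : Measurable (deriv U') := measurable_deriv U'
    exact (((measurable_id.mul m2).div m1).add_const 1).sub_const γ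
  have hAB : ∀ t ≥ T, Afun t = B t := by
    intro t ht
    have h1 : (1:ℝ) < t := by linarith
    simp only [hB]
    rw [hAdef, (hU'' t h1).deriv, Set.piecewise_eq_of_mem _ _ _ (Set.mem_Ioi.2 h1)]
  set a := min x 1 with ha
  set b := max x 1 with hb
  have ha0 : 0 < a := lt_min hx one_pos
  have h1ab : (1:ℝ) ∈ Set.Icc a b := ⟨min_le_right _ _, le_max_right _ _⟩
  have hxab : x ∈ Set.Icc a b := ⟨min_le_left _ _, le_max_left _ _⟩
  have hba : 0 ≤ b - a := by linarith [h1ab.1, h1ab.2]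
  have hratio := ratio_unif Afun B hBm ρ hρ T (by linarith) hAB hs hRV a b ha0
  -- eventually everything of the form t * s is beyond T
  have hlarge : ∀ᶠ t in atTop, T ≤ t ∧ ∀ s ∈ Set.Icc a b, T ≤ t * s := by
    filter_upwards [eventually_ge_atTop T,
      (tendsto_id.atTop_mul_const ha0).eventually (eventually_ge_atTop T)] with t h2 h3
    refine ⟨h2, fun s hs' => ?_⟩
    simp only [id] at h3
    exact h3.trans (mul_le_mul_of_nonneg_left hs'.1 (by linarith))
  -- step 1
  set φ : ℝ → ℝ := fun u => ∫ s in (1:ℝ)..u, s ^ (ρ - 1) with hφ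
  have hφd : ∀ s > 0, HasDerivAt φ (s ^ (ρ - 1)) s := fun s hs' =>
    hasDerivAt_prim (fun s => s ^ (ρ - 1))
      (fun y hy => (Real.continuousAt_rpow_const _ _ (Or.inl (ne_of_gt hy))).continuousWithinAt) s hs'
  have hφc : ContinuousOn φ (Set.Ioi 0) := fun s hs' => (hφd s hs').continuousAt.continuousWithinAt
  have hφ1 : φ 1 = 0 := by simp [hφ]
  set V : ℝ → ℝ := fun t => Real.log (U' t) - (γ - 1) * Real.log t with hV
  have hVd : ∀ t ≥ T, HasDerivAt V (Afun t / t) t := by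
    intro t ht
    have ht0 : t ≠ 0 := by linarith
    have h1 := ((hU'' t (by linarith)).log (hU0 t ht)).sub
      ((Real.hasDerivAt_log ht0).const_mul (γ - 1))
    refine h1.congr_deriv ?_
    rw [hAdef]
    have := hU0 t ht
    field_simp
    ring
  have step1 : ∀ ε > 0, ∀ᶠ t in atTop, ∀ s ∈ Set.Icc a b,
      |(V (t * s) - V t) / Afun t - φ s| ≤ ε := by
    intro ε hε
    have hδ : 0 < ε * a / (b - a + 1) := by positivity
    filter_upwards [hratio _ hδ, hlarge] with t h1 ⟨h2, h3⟩ s hs'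
    have hmv := mv_bound (fun s => (V (t * s) - V t) / Afun t - φ s)
      (fun s => (Afun (t * s) / Afun t - s ^ ρ) / s) a b (ε / (b - a + 1)) h1ab (by positivity)
      ?_ ?_ (by simp [hφ1]) s hs'
    · refine hmv.trans ?_
      rw [div_mul_eq_mul_div, div_le_iff₀ (by linarith)]
      nlinarith
    · intro r hr
      have hr0 : 0 < r := ha0.trans_le hr.1
      have ht0 : t ≠ 0 := by linarith
      have hA := hA0 t h2
      have hd := (((hVd (t * r) (h3 r hr)).comp r ((hasDerivAt_id r).const_mul t)).sub_const
        (V t)).div_const (Afun t) |>.sub (hφd r hr0)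
      refine hd.congr_deriv ?_
      rw [Real.rpow_sub_one hr0.ne']
      field_simp
    · intro r hr
      have hr0 : 0 < r := ha0.trans_le hr.1
      rw [abs_div, abs_of_pos hr0, div_le_iff₀ hr0]
      refine (h1 r hr).trans ?_
      rw [mul_div_right_comm]
      exact mul_le_mul_of_nonneg_left hr.1 (by positivity)
  -- bound for φ
  have hsub : Set.Icc a b ⊆ Set.Ioi 0 := fun s hs' => ha0.trans_le hs'.1
  obtain ⟨M, hM⟩ := isCompact_Icc.exists_bound_of_continuousOn (hφc.mono hsub)
  have hpc : ContinuousOn (fun s : ℝ => s ^ (γ - 1)) (Set.Ioi 0) :=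
    fun y hy => (Real.continuousAt_rpow_const _ _ (Or.inl (ne_of_gt hy))).continuousWithinAt
  obtain ⟨P, hP⟩ := isCompact_Icc.exists_bound_of_continuousOn (hpc.mono hsub)
  have hM0 : 0 ≤ M := (norm_nonneg _).trans (hM 1 h1ab)
  have hP0 : 0 ≤ P := (norm_nonneg _).trans (hP 1 h1ab)
  have hKd : ∀ s > 0, HasDerivAt (Kfun γ ρ) (s ^ (γ - 1) * φ s) s := fun s hs' =>
    hasDerivAt_prim (fun u => u ^ (γ - 1) * φ u) (hpc.mul hφc) s hs'
  have hK1 : Kfun γ ρ 1 = 0 := by simp [Kfun]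
  -- step 2
  rw [Metric.tendsto_nhds]
  intro ε hε
  set η := ε / (2 * ((P + 1) * (b - a + 1))) with hη
  have hη0 : 0 < η := by positivity
  have hη1 : 0 < min 1 (η / 2) := by positivity
  have hAs : ∀ᶠ t in atTop, |Afun t| < min (1 / (M + 1)) (η / 2 / (M + 1) ^ 2) := by
    have : 0 < min (1 / (M + 1)) (η / 2 / (M + 1) ^ 2) := by positivity
    have h := hC1.abs
    rw [abs_zero] at h
    exact h.eventually (gt_mem_nhds this)
  filter_upwards [step1 _ hη1, hlarge, hAs] with t h1 ⟨h2, h3⟩ h4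
  have hA := hA0 t h2
  have ht0 : 0 < t := by linarith
  have hUt := hU0 t h2
  have hAbs : 0 < |Afun t| := abs_pos.2 hA
  have hmv := mv_bound
    (fun s => ((Ufun (t * s) - Ufun t) / (t * U' t) - (s ^ γ - 1) / γ) / Afun t - Kfun γ ρ s)
    (fun s => s ^ (γ - 1) * ((Real.exp (V (t * s) - V t) - 1) / Afun t - φ s)) a b (P * η) h1ab
    (by positivity) ?_ ?_ (by simp [hK1]) x hxab
  · rw [Real.dist_eq]
    refine lt_of_le_of_lt hmv ?_
    have e : ε = 2 * ((P + 1) * (b - a + 1)) * η := by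
      rw [hη]; field_simp
    rw [e]
    have : P * (b - a) < 2 * ((P + 1) * (b - a + 1)) := by nlinarith [mul_nonneg hP0 hba]
    nlinarith
  · intro s hs'
    have hs0 : 0 < s := hsub hs'
    have hd1 := ((hU' (t * s) (by linarith [h3 s hs'])).comp s
      ((hasDerivAt_id s).const_mul t)).sub_const (Ufun t) |>.div_const (t * U' t)
    have hd2 := ((Real.hasDerivAt_rpow_const (p := γ) (Or.inl hs0.ne')).sub_const 1).div_const γ
    have hd := ((hd1.sub hd2).div_const (Afun t)).sub (hKd s hs0)
    refine hd.congr_deriv ?_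
    have hexp : Real.exp (V (t * s) - V t) * s ^ (γ - 1) = U' (t * s) / U' t := by
      have e : V (t * s) - V t = Real.log (U' (t * s) / U' t) - Real.log s * (γ - 1) := by
        simp only [hV]
        rw [Real.log_div (hU0 _ (h3 s hs')) hUt, Real.log_mul ht0.ne' hs0.ne']
        ring
      rw [e, Real.exp_sub, Real.exp_log (hUpos t h2 _ (h3 s hs')), ← Real.rpow_def_of_pos hs0]
      have := (Real.rpow_pos_of_pos hs0 (γ - 1)).ne'
      field_simp
    have e2 : s ^ (γ - 1) * ((Real.exp (V (t * s) - V t) - 1) / Afun t - φ s)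
      = (Real.exp (V (t * s) - V t) * s ^ (γ - 1) - s ^ (γ - 1)) / Afun t - s ^ (γ - 1) * φ s := by
      ring
    rw [e2, hexp]
    field_simp
  · intro s hs'
    rw [abs_mul]
    refine mul_le_mul (hP s hs') ?_ (abs_nonneg _) hP0
    have q1 := h1 s hs'
    set y := (V (t * s) - V t) / Afun t with hy
    have ey : V (t * s) - V t = Afun t * y := by rw [hy]; field_simp
    rw [ey]
    have q2 : |φ s| ≤ M := hM s hs'
    have q3 : |y| ≤ M + 1 := by
      have := abs_add_le (y - φ s) (φ s)
      rw [sub_add_cancel] at this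
      linarith [min_le_left 1 (η / 2)]
    have q4 : |Afun t * y| ≤ 1 := by
      rw [abs_mul]
      calc |Afun t| * |y| ≤ (1 / (M + 1)) * (M + 1) := by
            apply mul_le_mul (h4.le.trans (min_le_left _ _)) q3 (abs_nonneg _) (by positivity)
        _ = 1 := by field_simp
    have q5 := Real.abs_exp_sub_one_sub_id_le q4
    have q6 : |(Real.exp (Afun t * y) - 1) / Afun t - y| ≤ η / 2 := by
      have : (Real.exp (Afun t * y) - 1) / Afun t - y
        = (Real.exp (Afun t * y) - 1 - Afun t * y) / Afun t := by field_simp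
      rw [this, abs_div, div_le_iff₀ hAbs]
      refine q5.trans ?_
      have r1 : y ^ 2 ≤ (M + 1) ^ 2 := by
        rw [← sq_abs]
        exact pow_le_pow_left₀ (abs_nonneg _) q3 2
      have r2 : |Afun t| * (M + 1) ^ 2 ≤ η / 2 := by
        rw [← le_div_iff₀ (by positivity)]
        exact h4.le.trans (min_le_right _ _)
      calc (Afun t * y) ^ 2 = |Afun t| * y ^ 2 * |Afun t| := by
            rw [mul_pow, ← sq_abs (Afun t)]; ring
        _ ≤ η / 2 * |Afun t| := by
            apply mul_le_mul_of_nonneg_right _ hAbs.le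
            exact (mul_le_mul_of_nonneg_left r1 hAbs.le).trans r2
    have := abs_add_le ((Real.exp (Afun t * y) - 1) / Afun t - y) (y - φ s)
    rw [sub_add_sub_cancel] at this
    linarith [min_le_right 1 (η / 2)]
end
end

section
/- Under conditions (C1)–(C2) with γ > 0, the following Potter-type bounds hold: for every ε > 0 there exists t₀ such that for all t ≥ t₀ and all x ≥ 1, (1−ε)·x^{−ε}·K_{γ,ρ}(x) ≤ [ (U(tx) − U(t))/(t·U'(t)) − (x^γ − 1)/γ ] / A(t) ≤ (1+ε)·x^{ε}·K_{γ,ρ}(x). -/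
open Filter Real

noncomputable section

open MeasureTheory Set in
theorem uct_aux (h : ℝ → ℝ) (hm : Measurable h)
    (hl : ∀ w, Tendsto (fun v => h (v + w) - h v) atTop (nhds 0)) (η : ℝ) (hη : 0 < η) :
    ∃ v₀, ∀ v ≥ v₀, ∀ w ∈ Icc (0:ℝ) 1, |h (v + w) - h v| ≤ η := by
  have key : Tendsto (fun v : ℝ => (volume.restrict (Icc (0:ℝ) 2))
      {y | η / 2 ≤ |h (v + y) - h v|}) atTop (nhds 0) := by
    have := tendsto_measure_of_tendsto_indicator (μ := volume.restrict (Icc (0:ℝ) 2))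
      (L := (atTop : Filter ℝ)) (A := (∅ : Set ℝ))
      (As := fun v => {y | η / 2 ≤ |h (v + y) - h v|}) (B := univ) ?_ MeasurableSet.univ
      (by simp) (by simp) ?_
    · simpa using this
    · intro v
      have : Measurable (fun y => |h (v + y) - h v|) := by fun_prop
      exact measurableSet_le measurable_const this
    · intro y
      have h1 := (hl y).abs
      rw [abs_zero] at h1
      filter_upwards [h1.eventually (gt_mem_nhds (half_pos hη))] with v hv
      simp [hv]
  have hev := key.eventually (gt_mem_nhds (show (0:ENNReal) < 1 / 4 by simp))
  obtain ⟨v₀, hv₀⟩ := eventually_atTop.1 hev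
  refine ⟨v₀, fun v hv w hw => ?_⟩
  have hb1 := hv₀ v hv
  have hb2 := hv₀ (v + w) (by linarith [hw.1])
  set B1 := {y | η / 2 ≤ |h (v + y) - h v|} with hB1
  set B2 := {y | η / 2 ≤ |h (v + w + y) - h (v + w)|} with hB2
  rw [Measure.restrict_apply' measurableSet_Icc] at hb1 hb2
  by_contra hcon
  push Not at hcon
  have hsub : Icc w (w + 1) ⊆ (B1 ∩ Icc 0 2) ∪ ((fun y => y + (-w)) ⁻¹' (B2 ∩ Icc 0 2)) := by
    intro z hz
    by_cases h1 : z ∈ B1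
    · left
      exact ⟨h1, by linarith [hz.1, hw.1], by linarith [hz.2, hw.2]⟩
    · right
      refine ⟨?_, by simp; linarith [hz.1], by simp; linarith [hz.2]⟩
      simp only [hB1, mem_ofPred_eq, not_le] at h1
      simp only [hB2, mem_ofPred_eq]
      rw [show v + w + (z + -w) = v + z by ring]
      have h3 := abs_sub_abs_le_abs_sub (h (v + w) - h v) (h (v + z) - h v)
      rw [show h (v + w) - h v - (h (v + z) - h v) = -(h (v + z) - h (v + w)) by ring, abs_neg] at h3
      linarith
  have := measure_mono (μ := volume) hsub
  have h2 := this.trans (measure_union_le _ _)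
  rw [measure_preimage_add_right, Real.volume_Icc] at h2
  have h3 := h2.trans (add_le_add hb1.le hb2.le)
  rw [show w + 1 - w = 1 by ring] at h3
  have h4 := ENNReal.toReal_mono (by norm_num) h3
  rw [ENNReal.toReal_add (by norm_num) (by norm_num)] at h4
  norm_num at h4

theorem chain_aux (h : ℝ → ℝ) (η v₀ : ℝ) 
    (hv₀ : ∀ v ≥ v₀, ∀ w ∈ Set.Icc (0:ℝ) 1, |h (v + w) - h v| ≤ η) (n : ℕ) :
    ∀ v ≥ v₀, ∀ r ∈ Set.Icc (0:ℝ) 1, |h (v + (n + r)) - h v| ≤ (n + 1) * η := by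
  induction n with
  | zero => intro v hv r hr; simpa using hv₀ v hv r hr
  | succ n ih =>
    intro v hv r hr
    have h1 := ih (v + 1) (by linarith) r hr
    have h2 := hv₀ v hv 1 (by simp)
    push_cast
    rw [show v + ((n:ℝ) + 1 + r) = v + 1 + (n + r) by ring]
    have h3 := abs_sub_le (h (v + 1 + (n + r))) (h (v + 1)) (h v)
    linarith

theorem chain_aux' (h : ℝ → ℝ) (η v₀ : ℝ) (hη : 0 < η)
    (hv₀ : ∀ v ≥ v₀, ∀ w ∈ Set.Icc (0:ℝ) 1, |h (v + w) - h v| ≤ η) :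
    ∀ v ≥ v₀, ∀ w ≥ 0, |h (v + w) - h v| ≤ η + η * w := by
  intro v hv w hw
  have h1 := chain_aux h η v₀ hv₀ ⌊w⌋₊ v hv (w - ⌊w⌋₊)
    ⟨by linarith [Nat.floor_le hw], by linarith [Nat.lt_floor_add_one w]⟩
  rw [add_sub_cancel] at h1
  have := Nat.floor_le hw
  nlinarith

theorem potter_aux (a : ℝ → ℝ) (ρ : ℝ) (hm : Measurable (fun v => Real.log (a (Real.exp v))))
    (T : ℝ) (hpos : ∀ t ≥ T, 0 < a t)
    (hRV : ∀ x > 0, Tendsto (fun t => a (t * x) / a t) atTop (nhds (x ^ ρ)))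
    (δ : ℝ) (hδ : 0 < δ) :
    ∃ t₀ > 0, ∀ t ≥ t₀, ∀ s ≥ 1, (1 - δ) * s ^ (-δ) * s ^ ρ ≤ a (t * s) / a t ∧
      a (t * s) / a t ≤ (1 + δ) * s ^ δ * s ^ ρ := by
  set h : ℝ → ℝ := fun v => Real.log (a (Real.exp v)) - ρ * v with hh
  set η := Real.log (1 + δ) with hηd
  have hη : 0 < η := Real.log_pos (by linarith)
  have hηδ : η ≤ δ := by have := Real.log_le_sub_one_of_pos (show 0 < 1 + δ by linarith); linarith
  have hl : ∀ w, Tendsto (fun v => h (v + w) - h v) atTop (nhds 0) := by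
    intro w
    have h1 := ((hRV (Real.exp w) (Real.exp_pos w)).comp Real.tendsto_exp_atTop).log
      (Real.rpow_pos_of_pos (Real.exp_pos w) ρ).ne'
    rw [Real.log_rpow (Real.exp_pos w), Real.log_exp] at h1
    have h2 := h1.sub_const (ρ * w)
    rw [sub_self] at h2
    refine h2.congr' ?_
    have e1 := Real.tendsto_exp_atTop.eventually (eventually_ge_atTop T)
    have e2 := (tendsto_atTop_add_const_right atTop w tendsto_id).eventually e1
    filter_upwards [e1, e2] with v hv1 hv2
    simp only [id] at hv2
    simp only [Function.comp, hh]
    rw [← Real.exp_add, Real.log_div (hpos _ hv2).ne' (hpos _ hv1).ne']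
    ring
  have hmh : Measurable h := hm.sub (by fun_prop)
  obtain ⟨v₀, hv₀⟩ := uct_aux h hmh hl η hη
  have hc := chain_aux' h η v₀ hη hv₀
  refine ⟨max (max T 1) (Real.exp v₀), by positivity, fun t ht s hs => ?_⟩
  have htT : T ≤ t := (le_max_left T 1).trans ((le_max_left _ _).trans ht)
  have ht1 : 1 ≤ t := (le_max_right T 1).trans ((le_max_left _ _).trans ht)
  have ht0 : 0 < t := by linarith
  have hs0 : 0 < s := by linarith
  have htv : Real.exp v₀ ≤ t := (le_max_right _ _).trans ht
  have hb := hc (Real.log t) ((Real.le_log_iff_exp_le ht0).2 htv) (Real.log s) (Real.log_nonneg hs)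
  have hat := hpos t htT
  have hats := hpos (t * s) (by nlinarith)
  simp only [hh] at hb
  rw [← Real.log_mul ht0.ne' hs0.ne', Real.exp_log ht0, Real.exp_log (by positivity)] at hb
  rw [Real.log_mul ht0.ne' hs0.ne'] at hb
  obtain ⟨b1, b2⟩ := abs_le.1 hb
  have hls := Real.log_nonneg hs
  have hq : 0 < a (t * s) / a t := div_pos hats hat
  have hlq : Real.log (a (t * s) / a t) = Real.log (a (t * s)) - Real.log (a t) :=
    Real.log_div hats.ne' hat.ne'
  have hmul := mul_le_mul_of_nonneg_right hηδ hls
  constructor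
  · rcases le_or_gt (1 - δ) 0 with hd | hd
    · refine le_trans ?_ hq.le
      rw [mul_assoc]
      exact mul_nonpos_of_nonpos_of_nonneg hd (by positivity)
    · rw [← Real.log_le_log_iff (by positivity) hq, hlq, Real.log_mul (by positivity) (by positivity),
        Real.log_mul hd.ne' (by positivity), Real.log_rpow hs0, Real.log_rpow hs0]
      have : Real.log (1 - δ) ≤ - η := by
        rw [hηd, ← Real.log_inv]
        apply Real.log_le_log hd
        rw [le_inv_comm₀ hd (by linarith), ← one_div, le_div_iff₀ hd]
        nlinarith
      nlinarith
  · rw [← Real.log_le_log_iff hq (by positivity), hlq, Real.log_mul (by positivity) (by positivity),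
        Real.log_mul (by positivity) (by positivity), Real.log_rpow hs0, Real.log_rpow hs0]
    nlinarith

theorem cmp_aux (f g f' g' : ℝ → ℝ) (X : ℝ) 
    (hf : ∀ u ≥ 1, HasDerivAt f (f' u) u) (hg : ∀ u ≥ 1, HasDerivAt g (g' u) u)
    (hle : ∀ u ≥ 1, u ≤ X → f' u ≤ g' u) (h1 : f 1 ≤ g 1) :
    ∀ u ≥ 1, u ≤ X → f u ≤ g u := by
  intro u hu huX
  have hd : ∀ y ≥ 1, HasDerivAt (fun y => g y - f y) (g' y - f' y) y :=
    fun y hy => (hg y hy).sub (hf y hy)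
  have := monotoneOn_of_deriv_nonneg (convex_Icc (1:ℝ) u) (f := fun y => g y - f y)
    (fun y hy => (hd y hy.1).continuousAt.continuousWithinAt)
    (fun y hy => by
      rw [interior_Icc] at hy
      exact (hd y hy.1.le).differentiableAt.differentiableWithinAt)
    (fun y hy => by
      rw [interior_Icc] at hy
      rw [(hd y hy.1.le).deriv]
      linarith [hle y hy.1.le (by linarith [hy.2])])
  have := this (Set.left_mem_Icc.2 hu) (Set.right_mem_Icc.2 hu) hu
  simp only at this
  linarith

theorem I_deriv (ρ : ℝ) : ∀ u > 0, HasDerivAt (fun u => ∫ s in (1:ℝ)..u, s ^ (ρ - 1)) (u ^ (ρ - 1)) u := by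
  intro u hu
  have hc : ContinuousOn (fun s : ℝ => s ^ (ρ - 1)) (Set.Ioi 0) := fun s hs =>
    (Real.continuousAt_rpow_const s _ (Or.inl (ne_of_gt hs))).continuousWithinAt
  have hsub : Set.uIcc 1 u ⊆ Set.Ioi 0 := by
    intro s hs
    exact lt_of_lt_of_le (lt_min one_pos hu) hs.1
  exact intervalIntegral.integral_hasDerivAt_right ((hc.mono hsub).intervalIntegrable)
    (hc.stronglyMeasurableAtFilter isOpen_Ioi u hu) (hc.continuousAt (Ioi_mem_nhds hu))

theorem K_deriv (γ ρ : ℝ) : ∀ u > 0, HasDerivAt (Kfun γ ρ)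
    (u ^ (γ - 1) * ∫ s in (1:ℝ)..u, s ^ (ρ - 1)) u := by
  intro u hu
  have hc : ContinuousOn (fun u : ℝ => u ^ (γ - 1) * ∫ s in (1:ℝ)..u, s ^ (ρ - 1)) (Set.Ioi 0) :=
    fun s hs => ((Real.continuousAt_rpow_const s _ (Or.inl (ne_of_gt hs))).mul
      (I_deriv ρ s hs).continuousAt).continuousWithinAt
  have hsub : Set.uIcc 1 u ⊆ Set.Ioi 0 := by
    intro s hs
    exact lt_of_lt_of_le (lt_min one_pos hu) hs.1
  exact intervalIntegral.integral_hasDerivAt_right ((hc.mono hsub).intervalIntegrable)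
    (hc.stronglyMeasurableAtFilter isOpen_Ioi u hu) (hc.continuousAt (Ioi_mem_nhds hu))

theorem I_nonneg (ρ : ℝ) (u : ℝ) (hu : 1 ≤ u) : 0 ≤ ∫ s in (1:ℝ)..u, s ^ (ρ - 1) :=
  intervalIntegral.integral_nonneg hu fun s hs => Real.rpow_nonneg (by linarith [hs.1]) _

theorem K_nonneg (γ ρ : ℝ) (u : ℝ) (hu : 1 ≤ u) : 0 ≤ Kfun γ ρ u :=
  intervalIntegral.integral_nonneg hu fun s hs =>
    mul_nonneg (Real.rpow_nonneg (by linarith [hs.1]) _) (I_nonneg ρ s hs.1)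

/-- bounds on `(e^L - 1)/A` in terms of `q = L/A ≥ 0`. -/
theorem exp_aux (L A M : ℝ) (hA : A ≠ 0) (hq : 0 ≤ L / A) (hM : 1 ≤ M)
    (h1 : M⁻¹ ≤ Real.exp L) (h2 : Real.exp L ≤ M) :
    M⁻¹ * (L / A) ≤ (Real.exp L - 1) / A ∧ (Real.exp L - 1) / A ≤ M * (L / A) := by
  have e1 : L ≤ Real.exp L - 1 := by linarith [Real.add_one_le_exp L]
  have e2 : Real.exp L - 1 ≤ Real.exp L * L := by
    have := Real.add_one_le_exp (-L)
    have h3 := mul_le_mul_of_nonneg_left this (Real.exp_pos L).le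
    rw [← Real.exp_add, add_neg_cancel, Real.exp_zero] at h3
    linarith
  have hMi : M⁻¹ ≤ 1 := inv_le_one_of_one_le₀ hM
  set q := L / A with hqd
  have hL : L = q * A := by rw [hqd]; field_simp
  have k1 := mul_le_mul_of_nonneg_right h1 hq
  have k2 := mul_le_mul_of_nonneg_right h2 hq
  have k3 := mul_le_mul_of_nonneg_right hM hq
  have k4 := mul_le_mul_of_nonneg_right hMi hq
  have i1 : L / A = q := rfl
  have i2 : Real.exp L * L / A = Real.exp L * q := by rw [mul_div_assoc]
  rcases lt_or_gt_of_ne hA with h | h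
  · have j1 := div_le_div_of_nonpos_of_le h.le e1
    have j2 := div_le_div_of_nonpos_of_le h.le e2
    rw [i1] at j1
    rw [i2] at j2
    constructor <;> linarith
  · have j1 := div_le_div_of_nonneg_right e1 h.le
    have j2 := div_le_div_of_nonneg_right e2 h.le
    rw [i1] at j1
    rw [i2] at j2
    constructor <;> linarith

/-- Potter-type bounds: for every `ε > 0` there is `t₀` such that for all `t ≥ t₀` and
`x ≥ 1`, `(1−ε) x^{−ε} K_{γ,ρ}(x) ≤ ((U(tx) − U(t))/(t U'(t)) − (x^γ−1)/γ)/A(t)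
≤ (1+ε) x^{ε} K_{γ,ρ}(x)`. -/
theorem potter_type_bounds
    (F Ufun U' U'' : ℝ → ℝ) (γ : ℝ) (hγ : 0 < γ)
    (hUinv : ∀ t > 1, 1 - F (Ufun t) = 1 / t)
    (hU' : ∀ t > 1, HasDerivAt Ufun (U' t) t)
    (hU'' : ∀ t > 1, HasDerivAt U' (U'' t) t)
    (Afun : ℝ → ℝ) (hAdef : ∀ t, Afun t = t * U'' t / U' t + 1 - γ)
    (hC1 : Tendsto Afun atTop (nhds 0))
    (hSign : ∃ T : ℝ, (∀ t ≥ T, 0 < Afun t) ∨ (∀ t ≥ T, Afun t < 0))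
    (ρ : ℝ) (hρ : ρ ≤ 0)
    (hRV : ∀ x > 0, Tendsto (fun t => |Afun (t * x)| / |Afun t|) atTop (nhds (x ^ ρ))) :
    ∀ ε > (0:ℝ), ∃ t₀ : ℝ, ∀ t ≥ t₀, ∀ x ≥ (1:ℝ),
      (1 - ε) * x ^ (-ε) * Kfun γ ρ x ≤
        ((Ufun (t * x) - Ufun t) / (t * U' t) - (x ^ γ - 1) / γ) / Afun t ∧
      ((Ufun (t * x) - Ufun t) / (t * U' t) - (x ^ γ - 1) / γ) / Afun t ≤
        (1 + ε) * x ^ ε * Kfun γ ρ x := by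
  have hAne : ∃ T > 1, ∀ t ≥ T, Afun t ≠ 0 ∧ U' t ≠ 0 := by
    obtain ⟨T, hT⟩ := hSign
    have hA0 : ∀ t ≥ T, Afun t ≠ 0 := by
      rcases hT with h | h
      · exact fun t ht => (h t ht).ne'
      · exact fun t ht => (h t ht).ne
    have hev : ∀ᶠ t in atTop, U' t ≠ 0 := by
      by_cases h1 : γ = 1
      · filter_upwards [eventually_ge_atTop T] with t ht h0
        apply hA0 t ht
        rw [hAdef, h0, h1]; simp
      · have : (0:ℝ) ≠ 1 - γ := fun h => h1 (by linarith)
        filter_upwards [hC1.eventually_ne this] with t ht h0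
        apply ht
        rw [hAdef, h0]; simp
    obtain ⟨T', hT'⟩ := eventually_atTop.1 hev
    refine ⟨max (max T T') 2, lt_of_lt_of_le (by norm_num) (le_max_right _ _), fun t ht => ?_⟩
    have := (le_max_left _ _).trans ht
    exact ⟨hA0 t ((le_max_left _ _).trans this), hT' t ((le_max_right _ _).trans this)⟩
  obtain ⟨T, hT1, hT⟩ := hAne
  -- U' has constant sign
  have hUpos : ∀ t ≥ T, ∀ s ≥ T, 0 < U' s / U' t := by
    intro t ht s hs
    have hcont : ContinuousOn (fun s => U' s / U' t) (Set.Ici T) := fun s hs =>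
      ((hU'' s (lt_of_lt_of_le hT1 hs)).continuousAt.div_const _).continuousWithinAt
    by_contra hneg
    push Not at hneg
    have hmem : (0:ℝ) ∈ (fun s => U' s / U' t) '' (Set.Ici T) := by
      apply isPreconnected_Ici.intermediate_value (show s ∈ Set.Ici T from hs)
        (show t ∈ Set.Ici T from ht) hcont
      refine ⟨hneg, ?_⟩
      rw [div_self (hT t ht).2]; exact zero_le_one
    obtain ⟨y, hy, hy0⟩ := hmem
    exact (div_ne_zero (hT y hy).2 (hT t ht).2) hy0
  -- measurable version
  set a : ℝ → ℝ := fun t => |Afun t| with ha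
  set b : ℝ → ℝ := fun t => if 1 < t then |t * deriv U' t / deriv Ufun t + 1 - γ| else 0 with hb
  have hab : ∀ t > 1, b t = a t := by
    intro t ht
    simp only [ha, hb, if_pos ht]
    rw [(hU'' t ht).deriv, (hU' t ht).deriv, hAdef]
  have hbm : Measurable b := by
    refine Measurable.ite measurableSet_Ioi ?_ measurable_const
    have h1 : Measurable (deriv U') := measurable_deriv _
    have h2 : Measurable (deriv Ufun) := measurable_deriv _
    have : Measurable (fun t => t * deriv U' t / deriv Ufun t + 1 - γ) := by fun_prop
    exact this.abs
  have hbRV : ∀ x > 0, Tendsto (fun t => b (t * x) / b t) atTop (nhds (x ^ ρ)) := by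
    intro x hx
    refine (hRV x hx).congr' ?_
    filter_upwards [eventually_gt_atTop 1, (tendsto_id.atTop_mul_const hx).eventually
      (eventually_gt_atTop 1)] with t h1 h2
    rw [hab _ h1, hab (t * x) h2]
  intro ε hε
  set δ := min (ε / 2) (1 / 2) with hδd
  have hδ : 0 < δ := lt_min (by linarith) (by norm_num)
  have hδε : δ ≤ ε / 2 := min_le_left _ _
  have hδ1 : δ ≤ 1 / 2 := min_le_right _ _
  obtain ⟨t₁, ht₁, hP⟩ := potter_aux b ρ
    (Real.measurable_log.comp (hbm.comp Real.measurable_exp)) T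
    (fun t ht => by rw [hab t (by linarith)]; exact abs_pos.2 (hT t ht).1) hbRV δ hδ
  obtain ⟨t₂, ht₂⟩ := eventually_atTop.1 (hC1.abs.eventually (gt_mem_nhds (by simpa using hδ)))
  obtain ⟨t₃, hS⟩ := hSign
  refine ⟨max (max T t₁) (max t₂ t₃), fun t ht x hx => ?_⟩
  have htT : T ≤ t := (le_max_left _ _).trans ((le_max_left _ _).trans ht)
  have htt1 : t₁ ≤ t := (le_max_right _ _).trans ((le_max_left _ _).trans ht)
  have htt2 : t₂ ≤ t := (le_max_left _ _).trans ((le_max_right _ _).trans ht)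
  have htt3 : t₃ ≤ t := (le_max_right _ _).trans ((le_max_right _ _).trans ht)
  clear_value δ
  have ht0 : 0 < t := by linarith
  have htu : ∀ u ≥ (1:ℝ), t ≤ t * u := fun u hu => le_mul_of_one_le_right ht0.le hu
  have hx0 : 0 < x := by linarith
  have hAt : Afun t ≠ 0 := (hT t htT).1
  have hUt : U' t ≠ 0 := (hT t htT).2
  have hratio : ∀ u ≥ (1:ℝ), Afun (t * u) / Afun t = b (t * u) / b t := by
    intro u hu
    have hu' := htu u hu
    rw [hab t (by linarith), hab (t * u) (by linarith)]
    simp only [ha]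
    rcases hS with h | h
    · rw [abs_of_pos (h _ htt3), abs_of_pos (h _ (by linarith))]
    · rw [abs_of_neg (h _ htt3), abs_of_neg (h _ (by linarith)), neg_div_neg_eq]
  -- L
  set L : ℝ → ℝ := fun u => Real.log (U' (t * u) / U' t) - (γ - 1) * Real.log u with hL
  have hL1 : L 1 = 0 := by simp [hL, div_self hUt]
  have hderU : ∀ u ≥ (1:ℝ), HasDerivAt (fun u => Ufun (t * u)) (U' (t * u) * t) u := by
    intro u hu
    have hu' := htu u hu
    have h1 : HasDerivAt (fun u => t * u) t u := by simpa using (hasDerivAt_id u).const_mul t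
    exact (hU' (t * u) (by linarith)).comp u h1
  have hLd : ∀ u ≥ (1:ℝ), HasDerivAt L (Afun (t * u) / u) u := by
    intro u hu
    have hu' := htu u hu
    have hu0 : 0 < u := by linarith
    have h1 : HasDerivAt (fun u => t * u) t u := by simpa using (hasDerivAt_id u).const_mul t
    have h2 : HasDerivAt (fun u => U' (t * u)) (U'' (t * u) * t) u :=
      (hU'' (t * u) (by linarith)).comp u h1
    have h3 := ((h2.div_const (U' t)).log (hUpos t htT (t * u) (by linarith)).ne').sub
      ((Real.hasDerivAt_log hu0.ne').const_mul (γ - 1))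
    refine h3.congr_deriv ?_
    have h4 : U' (t * u) ≠ 0 := (hT (t * u) (by linarith)).2
    rw [hAdef]
    field_simp
    ring
  have hLexp : ∀ u ≥ (1:ℝ), U' (t * u) / U' t = u ^ (γ - 1) * Real.exp (L u) := by
    intro u hu
    have hu0 : 0 < u := by linarith
    have hu' := htu u hu
    simp only [hL]
    rw [Real.exp_sub, Real.exp_log (hUpos t htT (t * u) (by linarith)), mul_comm (γ - 1),
      ← Real.rpow_def_of_pos hu0]
    have := (Real.rpow_pos_of_pos hu0 (γ - 1)).ne'
    field_simp
  have hlogd : ∀ c : ℝ, ∀ u ≥ (1:ℝ), HasDerivAt (fun u => c * Real.log u) (c * u⁻¹) u :=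
    fun c u hu => (Real.hasDerivAt_log (by linarith)).const_mul c
  have hAb : ∀ u ≥ (1:ℝ), |Afun (t * u)| < δ := fun u hu => ht₂ _ (by linarith [htu u hu])
  have hLup := cmp_aux L (fun u => δ * Real.log u) _ _ x hLd (hlogd δ)
    (fun u hu _ => by
      rw [div_eq_mul_inv]
      exact mul_le_mul_of_nonneg_right (abs_lt.1 (hAb u hu)).2.le (by positivity)) (by simp [hL1])
  have hLlo := cmp_aux (fun u => (-δ) * Real.log u) L _ _ x (hlogd (-δ)) hLd 
    (fun u hu _ => by
      rw [div_eq_mul_inv]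
      exact mul_le_mul_of_nonneg_right (abs_lt.1 (hAb u hu)).1.le (by positivity)) (by simp [hL1])
  set M := x ^ δ with hM
  have hM1 : 1 ≤ M := Real.one_le_rpow hx hδ.le
  have hM0 : 0 < M := by linarith
  have hMi : M⁻¹ = x ^ (-δ) := (Real.rpow_neg hx0.le δ).symm
  have hMe : M = Real.exp (δ * Real.log x) := by
    rw [hM, Real.rpow_def_of_pos hx0, mul_comm]
  -- bounds on L / A
  set I : ℝ → ℝ := fun u => ∫ s in (1:ℝ)..u, s ^ (ρ - 1) with hI
  have hI1 : I 1 = 0 := by simp [hI]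
  have hLAd : ∀ u ≥ (1:ℝ), HasDerivAt (fun u => L u / Afun t) (Afun (t * u) / u / Afun t) u :=
    fun u hu => (hLd u hu).div_const _
  have hId : ∀ c : ℝ, ∀ u ≥ (1:ℝ), HasDerivAt (fun u => c * I u) (c * u ^ (ρ - 1)) u :=
    fun c u hu => (I_deriv ρ u (by linarith)).const_mul c
  have hder_eq : ∀ u ≥ (1:ℝ), Afun (t * u) / u / Afun t = (b (t * u) / b t) * u⁻¹ := by
    intro u hu
    rw [← hratio u hu]
    ring
  have hpow : ∀ u ≥ (1:ℝ), u ^ (ρ - 1) = u ^ ρ * u⁻¹ := by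
    intro u hu
    rw [Real.rpow_sub_one (by linarith), div_eq_mul_inv]
  have hQup := cmp_aux (fun u => L u / Afun t) (fun u => ((1 + δ) * M) * I u) _ _ x hLAd (hId _)
    (fun u hu hux => by
      have hu0 : 0 < u := by linarith
      rw [hder_eq u hu, hpow u hu, ← mul_assoc]
      refine mul_le_mul_of_nonneg_right ((hP t htt1 u hu).2.trans ?_) (by positivity)
      have : u ^ δ ≤ M := Real.rpow_le_rpow hu0.le hux hδ.le
      gcongr) (by simp [hL1, hI1])
  have hQlo := cmp_aux (fun u => ((1 - δ) * M⁻¹) * I u) (fun u => L u / Afun t) _ _ x (hId _) hLAd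
    (fun u hu hux => by
      have hu0 : 0 < u := by linarith
      rw [hder_eq u hu, hpow u hu, ← mul_assoc]
      refine mul_le_mul_of_nonneg_right (le_trans ?_ (hP t htt1 u hu).1) (by positivity)
      have : M⁻¹ ≤ u ^ (-δ) := by
        rw [hMi]
        exact Real.rpow_le_rpow_of_nonpos hu0 hux (by linarith)
      have : 0 ≤ 1 - δ := by linarith
      gcongr) (by simp [hL1, hI1])
  have hE : ∀ u ≥ (1:ℝ), u ≤ x → M⁻¹ * (L u / Afun t) ≤ (Real.exp (L u) - 1) / Afun t ∧
      (Real.exp (L u) - 1) / Afun t ≤ M * (L u / Afun t) := by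
    intro u hu hux
    have hlog : Real.log u ≤ Real.log x := Real.log_le_log (by linarith) hux
    have hlog' := mul_le_mul_of_nonneg_left hlog hδ.le
    refine exp_aux _ _ _ hAt ?_ hM1 ?_ ?_
    · refine le_trans ?_ (hQlo u hu hux)
      have : 0 ≤ 1 - δ := by linarith
      have := I_nonneg ρ u hu
      positivity
    · rw [hMe, ← Real.exp_neg]
      apply Real.exp_le_exp.2
      have := hLlo u hu hux
      linarith
    · rw [hMe]
      apply Real.exp_le_exp.2
      have := hLup u hu hux
      linarith
  set G : ℝ → ℝ := fun u => ((Ufun (t * u) - Ufun t) / (t * U' t) - (u ^ γ - 1) / γ) / Afun t with hG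
  have hG1 : G 1 = 0 := by simp [hG]
  have hGd : ∀ u ≥ (1:ℝ), HasDerivAt G (u ^ (γ - 1) * ((Real.exp (L u) - 1) / Afun t)) u := by
    intro u hu
    have hu0 : 0 < u := by linarith
    have h1 := ((((hderU u hu).sub_const (Ufun t)).div_const (t * U' t)).sub
      (((Real.hasDerivAt_rpow_const (p := γ) (Or.inl hu0.ne')).sub_const 1).div_const γ)).div_const
      (Afun t)
    refine h1.congr_deriv ?_
    rw [← mul_div_assoc, mul_sub, ← hLexp u hu]
    field_simp
  have hKd : ∀ c : ℝ, ∀ u ≥ (1:ℝ), HasDerivAt (fun u => c * Kfun γ ρ u) (c * (u ^ (γ - 1) * I u)) u :=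
    fun c u hu => (K_deriv γ ρ u (by linarith)).const_mul c
  have hK1 : Kfun γ ρ 1 = 0 := by simp [Kfun]
  have hKx := K_nonneg γ ρ x hx
  have hup := cmp_aux G (fun u => (M * ((1 + δ) * M)) * Kfun γ ρ u) _ _ x hGd (hKd _)
    (fun u hu hux => by
      have hu0 : 0 < u := by linarith
      have h1 := (hE u hu hux).2.trans (mul_le_mul_of_nonneg_left (hQup u hu hux) hM0.le)
      have h2 := mul_le_mul_of_nonneg_left h1 (Real.rpow_nonneg hu0.le (γ - 1))
      refine h2.trans (le_of_eq ?_)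
      ring) (by simp [hG1, hK1]) x hx le_rfl
  have hlo := cmp_aux (fun u => (M⁻¹ * ((1 - δ) * M⁻¹)) * Kfun γ ρ u) G _ _ x (hKd _) hGd
    (fun u hu hux => by
      have hu0 : 0 < u := by linarith
      have h1 := (mul_le_mul_of_nonneg_left (hQlo u hu hux) (inv_pos.2 hM0).le).trans (hE u hu hux).1
      have h2 := mul_le_mul_of_nonneg_left h1 (Real.rpow_nonneg hu0.le (γ - 1))
      refine le_trans (le_of_eq ?_) h2
      ring) (by simp [hG1, hK1]) x hx le_rfl
  have hMM : M * M ≤ x ^ ε := by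
    rw [hM, ← Real.rpow_add hx0]
    exact Real.rpow_le_rpow_of_exponent_le hx (by linarith)
  have hMMi : x ^ (-ε) ≤ M⁻¹ * M⁻¹ := by
    rw [hMi, ← Real.rpow_add hx0]
    exact Real.rpow_le_rpow_of_exponent_le hx (by linarith)
  constructor
  · refine le_trans ?_ hlo
    refine mul_le_mul_of_nonneg_right ?_ hKx
    have hp : 0 < x ^ (-ε) := Real.rpow_pos_of_pos hx0 _
    calc (1 - ε) * x ^ (-ε) ≤ (1 - δ) * x ^ (-ε) :=
          mul_le_mul_of_nonneg_right (by linarith) hp.le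
      _ ≤ (1 - δ) * (M⁻¹ * M⁻¹) := mul_le_mul_of_nonneg_left hMMi (by linarith)
      _ = _ := by ring
  · refine hup.trans ?_
    refine mul_le_mul_of_nonneg_right ?_ hKx
    calc M * ((1 + δ) * M) = (1 + δ) * (M * M) := by ring
      _ ≤ (1 + δ) * x ^ ε := mul_le_mul_of_nonneg_left hMM (by linarith)
      _ ≤ (1 + ε) * x ^ ε := mul_le_mul_of_nonneg_right (by linarith) (Real.rpow_nonneg hx0.le _)
end
end

section
/- Let γ > 0 and r < 1/3. There exist positive constants c₁, c₁', c₂, c₃ (depending only on r and γ) and a neighborhood of θ₀ = 1 such that for all θ in this neighborhood and all z ≥ 0: (1) ‖g₀(z,θ)‖³ ≤ G₁(z) := c₁·(log(1+γz) + (1+γz)^{r/γ} + c₁')³; (2) ‖∂g₀/∂θ(z,θ)‖ ≤ G₂(z) := c₂·(z(1+γz)^{−1} + z(1+γz)^{r/γ−1}); (3) ‖∂²g₀/∂θ²(z,θ)‖ ≤ G₃(z) := c₃·(z(1+γz)^{−1} + z(1+γz)^{r/γ−1} + z²(1+γz)^{−2} + z²(1+γz)^{r/γ−2}). -/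
open MeasureTheory ProbabilityTheory Filter Real NNReal

noncomputable section

/-- The estimating function `g(y, γ, σ)` from Zhang's estimating equations. -/
def gfun (r γ σ y : ℝ) : Fin 2 → ℝ :=
  ![Real.log (1 + γ * y / σ) - γ,
    (1 + γ * y / σ) ^ (r / γ) - 1 / (1 - r)]

/-- The θ-derivative `∂g₀/∂θ(z, θ)`. -/
def dgfun (r γ θ z : ℝ) : Fin 2 → ℝ :=
  ![-(γ * z) / θ ^ 2 * (1 + γ * z / θ)⁻¹,
    -(r * z) / θ ^ 2 * (1 + γ * z / θ) ^ (r / γ - 1)]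

theorem aux_rpow (p u w : ℝ) (hw : 0 < w) (h1 : w / 2 ≤ u) (h2 : u ≤ 2 * w) :
    u ^ p ≤ 2 ^ |p| * w ^ p := by
  have hu : 0 < u := by linarith
  rcases le_total 0 p with hp | hp
  · rw [abs_of_nonneg hp, ← Real.mul_rpow (by norm_num) hw.le]
    exact Real.rpow_le_rpow hu.le h2 hp
  · rw [abs_of_nonpos hp, Real.rpow_neg (by norm_num), ← Real.inv_rpow (by norm_num),
      ← Real.mul_rpow (by norm_num) hw.le]
    exact Real.rpow_le_rpow_of_nonpos (by positivity) (by linarith) hp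

theorem aux_deriv (r γ θ z : ℝ) (hθ : 0 < θ) (hu : 0 < 1 + γ * z / θ) :
    deriv (fun t => dgfun r γ t z) θ =
      ![2 * (γ * z) * (θ⁻¹) ^ 3 * (1 + γ * z / θ)⁻¹
          - (γ * z) ^ 2 * (θ⁻¹) ^ 4 * ((1 + γ * z / θ)⁻¹) ^ 2,
        2 * (r * z) * (θ⁻¹) ^ 3 * (1 + γ * z / θ) ^ (r / γ - 1)
          + (r * z) * (γ * z) * (r / γ - 1) * (θ⁻¹) ^ 4 * (1 + γ * z / θ) ^ (r / γ - 2)] := by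
  apply HasDerivAt.deriv
  have hne := hθ.ne'
  have hD : HasDerivAt (fun t : ℝ => 1 + γ * z / t) (-(γ * z) * (θ⁻¹) ^ 2) θ := by
    have := ((hasDerivAt_inv hne).const_mul (γ * z)).const_add 1
    simp only [← div_eq_mul_inv] at this
    refine this.congr_deriv ?_
    field_simp
  have hP : ∀ a : ℝ, HasDerivAt (fun t : ℝ => -a / t ^ 2) (2 * a * (θ⁻¹) ^ 3) θ := by
    intro a
    have := ((hasDerivAt_pow 2 θ).inv (pow_ne_zero 2 hne)).const_mul (-a)
    simp only [Pi.inv_apply, ← div_eq_mul_inv] at this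
    refine this.congr_deriv ?_
    field_simp
    norm_num
    ring
  rw [hasDerivAt_pi]
  intro i
  fin_cases i
  · have := (hP (γ * z)).mul (hD.inv hu.ne')
    simp only [dgfun, Fin.zero_eta, Matrix.cons_val_zero]
    refine this.congr_deriv ?_
    simp only [Pi.inv_apply]
    field_simp
    ring
  · have := (hP (r * z)).mul (hD.rpow_const (p := r / γ - 1) (Or.inl hu.ne'))
    simp only [dgfun, Fin.mk_one, Matrix.cons_val_one, Matrix.cons_val_zero]
    refine this.congr_deriv ?_
    rw [show r / γ - 1 - 1 = r / γ - 2 by ring]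
    field_simp

set_option maxHeartbeats 4000000 in
/-- Lemma 2 (parts 1–3): domination of `g₀`, `∂g₀/∂θ` and `∂²g₀/∂θ²` on a neighborhood
of `θ₀ = 1`, uniformly in `z ≥ 0`. -/
theorem g0_dominated_near_one (γ r : ℝ) (hγ : 0 < γ) (hr : r < 1 / 3) :
    ∃ c₁ c₁' c₂ c₃ : ℝ, 0 < c₁ ∧ 0 < c₁' ∧ 0 < c₂ ∧ 0 < c₃ ∧
      ∃ δ > (0:ℝ), ∀ θ : ℝ, |θ - 1| < δ → ∀ z : ℝ, 0 ≤ z →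
        ‖gfun r γ θ z‖ ^ 3 ≤
          c₁ * (Real.log (1 + γ * z) + (1 + γ * z) ^ (r / γ) + c₁') ^ 3 ∧
        ‖dgfun r γ θ z‖ ≤
          c₂ * (z * (1 + γ * z)⁻¹ + z * (1 + γ * z) ^ (r / γ - 1)) ∧
        ‖deriv (fun t => dgfun r γ t z) θ‖ ≤
          c₃ * (z * (1 + γ * z)⁻¹ + z * (1 + γ * z) ^ (r / γ - 1) +
            z ^ 2 * ((1 + γ * z) ^ 2)⁻¹ + z ^ 2 * (1 + γ * z) ^ (r / γ - 2)) := by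
  set A : ℝ := 2 ^ |r / γ| with hA
  set B : ℝ := 2 ^ |r / γ - 1| with hB
  set C : ℝ := 2 ^ |r / γ - 2| with hC
  have hA1 : 1 ≤ A := Real.one_le_rpow (by norm_num) (abs_nonneg _)
  have hB1 : 1 ≤ B := Real.one_le_rpow (by norm_num) (abs_nonneg _)
  have hC1 : 1 ≤ C := Real.one_le_rpow (by norm_num) (abs_nonneg _)
  have hr1 : 0 < 1 / (1 - r) := by
    apply one_div_pos.mpr; linarith
  refine ⟨A ^ 3, γ + 1 + 1 / (1 - r), 8 * γ + 4 * |r| * B,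
    32 * γ + 64 * γ ^ 2 + 16 * |r| * B + 16 * (|r| * γ * |r / γ - 1|) * C,
    by positivity, by positivity, by positivity, by positivity, 1 / 2, by norm_num, ?_⟩
  intro θ hθ z hz
  rw [abs_lt] at hθ
  have hθ0 : 0 < θ := by linarith
  have hs : θ⁻¹ ≤ 2 := by
    rw [inv_le_comm₀ hθ0 (by norm_num)]; linarith
  have hs' : 2 / 3 ≤ θ⁻¹ := by
    rw [le_inv_comm₀ (by norm_num) hθ0]; linarith
  have hgz : 0 ≤ γ * z := by positivity
  have hu1 : (1 + γ * z) / 2 ≤ 1 + γ * z / θ := by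
    rw [div_eq_mul_inv (γ * z)]; nlinarith
  have hu2 : 1 + γ * z / θ ≤ 2 * (1 + γ * z) := by
    rw [div_eq_mul_inv (γ * z)]; nlinarith
  have hu3 : 1 ≤ 1 + γ * z / θ := by
    have : 0 ≤ γ * z / θ := by positivity
    linarith
  have hD := aux_deriv r γ θ z hθ0 (by linarith)
  rw [hD]
  simp only [gfun, dgfun]
  set u := 1 + γ * z / θ with hu
  have hw : 1 ≤ 1 + γ * z := by linarith
  set w := 1 + γ * z with hwdef
  have hw0 : 0 < w := by linarith
  have hu0 : 0 < u := by linarith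
  have hpA := aux_rpow (r / γ) u w hw0 hu1 hu2
  have hpB := aux_rpow (r / γ - 1) u w hw0 hu1 hu2
  have hpC := aux_rpow (r / γ - 2) u w hw0 hu1 hu2
  rw [← hA] at hpA
  rw [← hB] at hpB
  rw [← hC] at hpC
  have hinv : u⁻¹ ≤ 2 * w⁻¹ := by
    have := inv_anti₀ (by positivity) hu1
    rw [inv_div] at this
    rwa [← div_eq_mul_inv]
  have huA : 0 < u ^ (r / γ) := by positivity
  have huB : 0 < u ^ (r / γ - 1) := by positivity
  have huC : 0 < u ^ (r / γ - 2) := by positivity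
  have hwA : 0 < w ^ (r / γ) := by positivity
  have hwB : 0 < w ^ (r / γ - 1) := by positivity
  have hwC : 0 < w ^ (r / γ - 2) := by positivity
  have hlw : 0 ≤ Real.log w := Real.log_nonneg hw
  have hlu : 0 ≤ Real.log u := Real.log_nonneg hu3
  have hlu2 : Real.log u ≤ 1 + Real.log w := by
    have h := Real.log_le_log hu0 hu2
    rw [Real.log_mul (by norm_num) hw0.ne'] at h
    have := Real.log_two_lt_d9
    linarith
  have hs0 : 0 < θ⁻¹ := by positivity
  have e1 : z * u⁻¹ ≤ 2 * (z * w⁻¹) := by nlinarith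
  have e2 : z * u ^ (r / γ - 1) ≤ B * (z * w ^ (r / γ - 1)) := by nlinarith
  have e3 : z ^ 2 * (u⁻¹) ^ 2 ≤ 4 * (z ^ 2 * (w ^ 2)⁻¹) := by
    have : (z * u⁻¹) ^ 2 ≤ (2 * (z * w⁻¹)) ^ 2 := pow_le_pow_left₀ (by positivity) e1 2
    rw [← inv_pow]
    nlinarith
  have e4 : z ^ 2 * u ^ (r / γ - 2) ≤ C * (z ^ 2 * w ^ (r / γ - 2)) := by
    have := mul_le_mul_of_nonneg_left hpC (sq_nonneg z)
    linarith
  have s2 : (θ⁻¹) ^ 2 ≤ 4 := by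
    have := pow_le_pow_left₀ hs0.le hs 2
    norm_num at this ⊢; exact this
  have s3 : (θ⁻¹) ^ 3 ≤ 8 := by
    have := pow_le_pow_left₀ hs0.le hs 3
    norm_num at this ⊢; exact this
  have s4 : (θ⁻¹) ^ 4 ≤ 16 := by
    have := pow_le_pow_left₀ hs0.le hs 4
    norm_num at this ⊢; exact this
  have x1 : 0 ≤ z * w⁻¹ := by positivity
  have x2 : 0 ≤ z * w ^ (r / γ - 1) := by positivity
  have x3 : 0 ≤ z ^ 2 * (w ^ 2)⁻¹ := by positivity
  have x4 : 0 ≤ z ^ 2 * w ^ (r / γ - 2) := by positivity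
  have y1 : 0 ≤ z * u⁻¹ := by positivity
  have y2 : 0 ≤ z * u ^ (r / γ - 1) := by positivity
  have y3 : 0 ≤ z ^ 2 * (u⁻¹) ^ 2 := by positivity
  have y4 : 0 ≤ z ^ 2 * u ^ (r / γ - 2) := by positivity
  have hr0 := abs_nonneg r
  -- generic bound
  have key : ∀ k s S y Y : ℝ, 0 ≤ k → 0 ≤ S → s ≤ S → 0 ≤ y → y ≤ Y →
      k * (s * y) ≤ k * (S * Y) := by
    intro k s S y Y hk hS hsS hy hyY
    exact mul_le_mul_of_nonneg_left (mul_le_mul hsS hyY hy hS) hk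
  generalize w ^ (r / γ) = wA at *
  generalize w ^ (r / γ - 1) = wB at *
  generalize w ^ (r / γ - 2) = wC at *
  generalize u ^ (r / γ) = uA at *
  generalize u ^ (r / γ - 1) = uB at *
  generalize u ^ (r / γ - 2) = uC at *
  have t1 := key γ _ 4 _ _ hγ.le (by norm_num) s2 y1 e1
  have t2 := key |r| _ 4 _ _ hr0 (by norm_num) s2 y2 e2
  have t3 := key γ _ 8 _ _ hγ.le (by norm_num) s3 y1 e1
  have t4 := key |r| _ 8 _ _ hr0 (by norm_num) s3 y2 e2
  have t5 := key (γ ^ 2) _ 16 _ _ (by positivity) (by norm_num) s4 y3 e3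
  have t6 := key (|r| * γ * |r / γ - 1|) _ 16 _ _ (by positivity) (by norm_num) s4 y4 e4
  set a := z * w⁻¹ with ha
  set b := z * wB with hb
  set c := z ^ 2 * (w ^ 2)⁻¹ with hc
  set d := z ^ 2 * wC with hd
  have hG : 0 ≤ |r| * B := by positivity
  have hH : 0 ≤ |r| * γ * |r / γ - 1| * C := by positivity
  have m1 : 0 ≤ γ * a := by positivity
  have m2 : 0 ≤ γ * b := by positivity
  have m3 : 0 ≤ γ * c := by positivity
  have m4 : 0 ≤ γ * d := by positivity
  have n1 : 0 ≤ γ ^ 2 * a := by positivity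
  have n2 : 0 ≤ γ ^ 2 * b := by positivity
  have n3 : 0 ≤ γ ^ 2 * c := by positivity
  have n4 : 0 ≤ γ ^ 2 * d := by positivity
  have o1 : 0 ≤ |r| * B * a := by positivity
  have o2 : 0 ≤ |r| * B * b := by positivity
  have o3 : 0 ≤ |r| * B * c := by positivity
  have o4 : 0 ≤ |r| * B * d := by positivity
  have q1 : 0 ≤ |r| * γ * |r / γ - 1| * C * a := by positivity
  have q2 : 0 ≤ |r| * γ * |r / γ - 1| * C * b := by positivity
  have q3 : 0 ≤ |r| * γ * |r / γ - 1| * C * c := by positivity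
  have q4 : 0 ≤ |r| * γ * |r / γ - 1| * C * d := by positivity
  refine ⟨?_, ?_, ?_⟩
  · rw [← mul_pow]
    apply pow_le_pow_left₀ (norm_nonneg _)
    have hlA : Real.log w ≤ A * Real.log w := by nlinarith
    have hgA : γ + 1 + 1 / (1 - r) ≤ A * (γ + 1 + 1 / (1 - r)) := by
      have : 0 < γ + 1 + 1 / (1 - r) := by positivity
      nlinarith
    have hwA' : 0 ≤ A * wA := by positivity
    rw [pi_norm_le_iff_of_nonneg (by positivity)]
    intro i
    fin_cases i
    · simp only [Fin.zero_eta, Matrix.cons_val_zero, Real.norm_eq_abs]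
      rw [abs_le]; constructor <;> linarith
    · simp only [Fin.mk_one, Matrix.cons_val_one, Matrix.cons_val_zero, Real.norm_eq_abs]
      rw [abs_le]; constructor <;> linarith
  · rw [pi_norm_le_iff_of_nonneg (by positivity)]
    intro i
    fin_cases i
    · simp only [Fin.zero_eta, Matrix.cons_val_zero, Real.norm_eq_abs]
      have : |-(γ * z) / θ ^ 2 * u⁻¹| = γ * (θ⁻¹ ^ 2 * (z * u⁻¹)) := by
        rw [abs_mul, abs_div, abs_neg, abs_of_nonneg hgz, abs_of_pos (by positivity : 0 < θ ^ 2),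
          abs_of_pos (by positivity : 0 < u⁻¹), div_eq_mul_inv, inv_pow]
        ring
      rw [this]; linarith
    · simp only [Fin.mk_one, Matrix.cons_val_one, Matrix.cons_val_zero, Real.norm_eq_abs]
      have : |-(r * z) / θ ^ 2 * uB| = |r| * (θ⁻¹ ^ 2 * (z * uB)) := by
        rw [abs_mul, abs_div, abs_neg, abs_mul r z, abs_of_nonneg hz,
          abs_of_pos (by positivity : 0 < θ ^ 2), abs_of_pos huB, div_eq_mul_inv, inv_pow]
        ring
      rw [this]; linarith
  · rw [pi_norm_le_iff_of_nonneg (by positivity)]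
    intro i
    fin_cases i
    · simp only [Fin.zero_eta, Matrix.cons_val_zero, Real.norm_eq_abs]
      refine (abs_sub _ _).trans ?_
      rw [abs_of_nonneg (by positivity), abs_of_nonneg (by positivity)]
      linarith
    · simp only [Fin.mk_one, Matrix.cons_val_one, Matrix.cons_val_zero, Real.norm_eq_abs]
      refine (abs_add_le _ _).trans ?_
      simp only [abs_mul, abs_of_pos huB, abs_of_pos huC, abs_of_nonneg hz, abs_of_pos hγ,
        abs_pow, abs_of_pos hs0, abs_two]
      linarith
end
end

section
/- Let γ > 0, ρ ≤ 0, α ∈ ℝ, β ≥ 0, and let U be a random variable uniformly distributed on [0,1]. If 1 − α − γ > 0, then E[ U^{−α} · K_{γ,ρ}(1/U) · (−log U)^{β} ] is finite. -/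
open MeasureTheory Filter Real

noncomputable section

theorem prim_contOn (f : ℝ → ℝ) (hf : ContinuousOn f (Set.Ioi 0)) :
    ContinuousOn (fun x => ∫ u in (1:ℝ)..x, f u) (Set.Ioi 0) := by
  intro x hx
  have hx' : (0:ℝ) < x := hx
  have hi : IntervalIntegrable f volume 1 x := by
    apply ContinuousOn.intervalIntegrable
    apply hf.mono
    intro y hy
    rw [Set.mem_uIcc] at hy
    rcases hy with h | h
    · exact lt_of_lt_of_le one_pos h.1
    · exact lt_of_lt_of_le hx' h.1
  exact (intervalIntegral.integral_hasDerivAt_right hi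
    (hf.stronglyMeasurableAtFilter isOpen_Ioi x hx)
    (hf.continuousAt (Ioi_mem_nhds hx'))).continuousAt.continuousWithinAt

theorem rpow_contOn (a : ℝ) : ContinuousOn (fun x : ℝ => x ^ a) (Set.Ioi 0) := by
  intro x hx
  exact (Real.continuousAt_rpow_const x a (Or.inl (ne_of_gt hx))).continuousWithinAt

theorem inner_contOn (γ ρ : ℝ) :
    ContinuousOn (fun u : ℝ => u ^ (γ - 1) * ∫ s in (1:ℝ)..u, s ^ (ρ - 1)) (Set.Ioi 0) :=
  (rpow_contOn _).mul (prim_contOn _ (rpow_contOn _))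

theorem contOn_ii {f : ℝ → ℝ} (hf : ContinuousOn f (Set.Ioi 0)) {x : ℝ} (hx : 1 ≤ x) :
    IntervalIntegrable f volume 1 x := by
  apply ContinuousOn.intervalIntegrable
  apply hf.mono
  rw [Set.uIcc_of_le hx]
  intro y hy
  exact lt_of_lt_of_le one_pos hy.1

theorem Kinner_bound (ρ : ℝ) (hρ : ρ ≤ 0) (u : ℝ) (hu : 1 ≤ u) :
    0 ≤ (∫ s in (1:ℝ)..u, s ^ (ρ - 1)) ∧ (∫ s in (1:ℝ)..u, s ^ (ρ - 1)) ≤ Real.log u := by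
  constructor
  · apply intervalIntegral.integral_nonneg hu
    intro s hs
    exact Real.rpow_nonneg (by linarith [hs.1]) _
  · have h : (∫ s in (1:ℝ)..u, s⁻¹) = Real.log u := by
      rw [integral_inv_of_pos one_pos (by linarith)]; simp
    rw [← h]
    apply intervalIntegral.integral_mono_on hu (contOn_ii (rpow_contOn _) hu)
    · apply contOn_ii _ hu
      exact continuousOn_inv₀.mono (fun y hy => ne_of_gt hy)
    · intro s hs
      rw [← Real.rpow_neg_one]
      exact Real.rpow_le_rpow_of_exponent_le hs.1 (by linarith)

theorem Kfun_bound (γ ρ : ℝ) (hγ : 0 < γ) (hρ : ρ ≤ 0) (x : ℝ) (hx : 1 ≤ x) :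
    0 ≤ Kfun γ ρ x ∧ Kfun γ ρ x ≤ x ^ γ / γ * Real.log x := by
  unfold Kfun
  constructor
  · apply intervalIntegral.integral_nonneg hx
    intro s hs
    exact mul_nonneg (Real.rpow_nonneg (by linarith [hs.1]) _) (Kinner_bound ρ hρ s hs.1).1
  · calc _ ≤ ∫ u in (1:ℝ)..x, u ^ (γ - 1) * Real.log x := by
          apply intervalIntegral.integral_mono_on hx (contOn_ii (inner_contOn γ ρ) hx)
            ((contOn_ii (rpow_contOn _) hx).mul_const _)
          intro s hs
          have h0 : (0:ℝ) < s := by linarith [hs.1]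
          apply mul_le_mul_of_nonneg_left _ (Real.rpow_nonneg h0.le _)
          exact (Kinner_bound ρ hρ s hs.1).2.trans (Real.log_le_log h0 hs.2)
      _ = (x ^ γ - 1) / γ * Real.log x := by
          rw [intervalIntegral.integral_mul_const, integral_rpow (Or.inl (by linarith))]
          simp
      _ ≤ _ := by
          apply mul_le_mul_of_nonneg_right _ (Real.log_nonneg hx)
          apply div_le_div_of_nonneg_right _ hγ.le
          linarith

theorem K_integrableOn (γ ρ α β : ℝ) (hγ : 0 < γ) (hρ : ρ ≤ 0) (hβ : 0 ≤ β)
    (hαγ : 0 < 1 - α - γ) :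
    Integrable (fun x : ℝ => x ^ (-α) * Kfun γ ρ (1 / x) * (-Real.log x) ^ β)
      (volume.restrict (Set.Icc (0:ℝ) 1)) := by
  change IntegrableOn _ _ _
  rw [integrableOn_Icc_iff_integrableOn_Ioc]
  have hb : 0 < β + 1 := by linarith
  obtain ⟨e, he, hed⟩ : ∃ e : ℝ, 0 < e ∧ e * (β + 1) = (1 - α - γ) / 2 :=
    ⟨(1 - α - γ) / 2 / (β + 1), by positivity, by field_simp⟩
  have hg : IntegrableOn (fun x : ℝ => (γ⁻¹ * (e⁻¹) ^ (β + 1)) * x ^ ((1 - α - γ) / 2 - 1))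
      (Set.Ioc 0 1) := by
    apply Integrable.const_mul
    have := intervalIntegral.intervalIntegrable_rpow' (a := 0) (b := 1)
      (r := (1 - α - γ) / 2 - 1) (by linarith)
    rwa [intervalIntegrable_iff_integrableOn_Ioc_of_le zero_le_one] at this
  refine Integrable.mono' hg ?_ ?_
  · apply ContinuousOn.aestronglyMeasurable _ measurableSet_Ioc
    have hs : Set.Ioc (0:ℝ) 1 ⊆ Set.Ioi 0 := fun y hy => hy.1
    have hK : ContinuousOn (Kfun γ ρ) (Set.Ioi 0) := prim_contOn _ (inner_contOn γ ρ)
    have hK' : ContinuousOn (fun x : ℝ => Kfun γ ρ (1 / x)) (Set.Ioi 0) := by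
      apply hK.comp (t := Set.Ioi 0)
      · exact continuousOn_const.div continuousOn_id (fun y hy => ne_of_gt hy)
      · intro y hy
        have hy0 : (0:ℝ) < y := hy
        exact Set.mem_Ioi.mpr (one_div_pos.mpr hy0)
    refine (((rpow_contOn _).mul hK').mul ?_).mono hs
    apply ContinuousOn.rpow_const _ (fun _ _ => Or.inr hβ)
    exact (Real.continuousOn_log.mono (fun y hy => ne_of_gt hy)).neg
  · refine (ae_restrict_iff' measurableSet_Ioc).mpr (Eventually.of_forall ?_)
    intro x hx
    obtain ⟨h0, h1⟩ := hx
    have hx1 : 1 ≤ 1 / x := by rw [le_div_iff₀ h0]; linarith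
    obtain ⟨k0, k1⟩ := Kfun_bound γ ρ hγ hρ _ hx1
    have hl0 : 0 ≤ -Real.log x := by linarith [Real.log_nonpos h0.le h1]
    have hlog : Real.log (1 / x) = -Real.log x := by simp
    have hl1 : -Real.log x ≤ e⁻¹ * x ^ (-e) := by
      have := Real.log_le_rpow_div (x := 1 / x) (by positivity) he
      rw [hlog] at this
      refine this.trans (le_of_eq ?_)
      rw [one_div, Real.inv_rpow h0.le, Real.rpow_neg h0.le]
      ring
    rw [hlog] at k1
    have hxa := Real.rpow_nonneg h0.le (-α)
    have hlb := Real.rpow_nonneg hl0 β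
    rw [Real.norm_of_nonneg (by positivity)]
    have hp : (-Real.log x) ^ (β + 1) = (-Real.log x) ^ β * (-Real.log x) := by
      rw [Real.rpow_add_of_nonneg hl0 hβ zero_le_one, Real.rpow_one]
    calc _ ≤ x ^ (-α) * ((1 / x) ^ γ / γ * (-Real.log x)) * (-Real.log x) ^ β := by gcongr
      _ = γ⁻¹ * (x ^ (-α) * x ^ (-γ)) * (-Real.log x) ^ (β + 1) := by
          rw [hp, one_div, Real.inv_rpow h0.le, Real.rpow_neg h0.le γ]; ring
      _ ≤ γ⁻¹ * (x ^ (-α) * x ^ (-γ)) * (e⁻¹ * x ^ (-e)) ^ (β + 1) := by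
          gcongr
      _ = (γ⁻¹ * (e⁻¹) ^ (β + 1)) * (x ^ (-α) * x ^ (-γ) * x ^ (-e * (β + 1))) := by
          rw [Real.mul_rpow (by positivity) (by positivity), ← Real.rpow_mul h0.le]; ring
      _ = _ := by
          rw [← Real.rpow_add h0, ← Real.rpow_add h0]
          congr 2
          linarith

/-- Lemma 3 (i): if `1 − α − γ > 0` then `E[U^{−α} K_{γ,ρ}(1/U) (−log U)^β] < ∞`
for `U` uniform on `[0,1]`. -/
theorem uniform_K_moment_finite
    (γ ρ α β : ℝ) (hγ : 0 < γ) (hρ : ρ ≤ 0) (hβ : 0 ≤ β) (hαγ : 0 < 1 - α - γ)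
    {Ω : Type*} [MeasurableSpace Ω] (P : Measure Ω) [IsProbabilityMeasure P]
    (U : Ω → ℝ) (hUmeas : Measurable U)
    (hUlaw : Measure.map U P = volume.restrict (Set.Icc (0:ℝ) 1)) :
    Integrable (fun ω => U ω ^ (-α) * Kfun γ ρ (1 / U ω) * (-Real.log (U ω)) ^ β) P := by
  have h := K_integrableOn γ ρ α β hγ hρ hβ hαγ
  rw [← hUlaw] at h
  exact h.comp_measurable hUmeas
end
end
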